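/- Let n > n₁ ≥ 2 and m > m₁ ≥ 2 be integers with F_n - F_{n₁} = T_m - T_{m₁}. Then |((α^{n-n₁} - 1)/(√5·c_α·(α_T^{m-m₁} - 1)))·α^{n₁}·α_T^{-m₁} - 1| < 1.64·α^{4-n}, where α = (1+√5)/2, α_T is the unique real root of x³ - x² - x - 1, and c_α = 1/(-α_T² + 4α_T - 1). -/

import Mathlib

/-- The Tribonacci sequence: T 0 = 0, T 1 = T 2 = 1,
    T (k+3) = T (k+2) + T (k+1) + T k. -/
def trib : ℕ → ℤ
  | 0 => 0
  | 1 => 1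
  | 2 => 1
  | n + 3 => trib (n + 2) + trib (n + 1) + trib n

/-!
Write `φ` and `ψ` for the golden ratio and its conjugate, `t` for the tribonacci constant, and
`e k = T k - c * t ^ k` for the error in the tribonacci analogue of Binet's formula. The equation
`F n - F n₁ = T m - T m₁` says that `X = φ ^ n - φ ^ n₁` and `Z = √5 * c * (t ^ m - t ^ m₁)`
differ by `ψ ^ n - ψ ^ n₁ + √5 * (e m - e m₁)`, while the linear form equals `X / Z - 1`.

To bound `e`, factor `x ^ 3 - x ^ 2 - x - 1 = (x - t) * (x ^ 2 + (t - 1) * x + q)`, where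
`q = t ^ 2 - t - 1 = t⁻¹`. The sequence `e` satisfies the recurrence of the quadratic factor, so
the form `e (k + 1) ^ 2 + (t - 1) * e (k + 1) * e k + q * e k ^ 2` is multiplied by `q` at each
step. This form is positive definite, so `e k ^ 2` decays like `t⁻¹ ^ k`.
-/

lemma div_mul_pow_mul_zpow_neg_eq {K : Type*} [Field K] (a A b : K)
    {k n l m : ℕ} (hkn : k ≤ n) (hlm : l ≤ m) :
    (a ^ (n - k) - 1) / (A * (b ^ (m - l) - 1)) * a ^ k * b ^ (-(l : ℤ)) =
      (a ^ n - a ^ k) / (A * (b ^ m - b ^ l)) := by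
  rw [← pow_sub_mul_pow a hkn, ← pow_sub_mul_pow b hlm, zpow_neg, zpow_natCast]
  simp only [← sub_one_mul, div_eq_mul_inv, mul_inv]
  ring

lemma abs_div_sub_one_le {K : Type*} [Field K] [LinearOrder K] [IsStrictOrderedRing K]
    {x z b d : K} (hx : 0 < x) (hb : 0 < b) (hbz : b ≤ z) (hd : |x - z| ≤ d) :
    |x / z - 1| ≤ d * (1 + d / b) / x := by
  have hz : 0 < z := hb.trans_le hbz
  have hd₀ : 0 ≤ d := (abs_nonneg _).trans hd
  have hxz : x ≤ (1 + d / b) * z :=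
    calc x ≤ z + d := by linarith [(abs_le.mp hd).2]
      _ = z + d / b * b := by rw [div_mul_cancel₀ _ hb.ne']
      _ ≤ z + d / b * z := by gcongr
      _ = (1 + d / b) * z := by ring
  rw [div_sub_one hz.ne', abs_div, abs_of_pos hz, div_le_div_iff₀ hz hx, mul_assoc]
  gcongr

section Recurrence

variable {R : Type*} [CommRing R] {p q : R} {x : ℕ → R}

/-- The quadratic form `Y ^ 2 + p * Y * X + q * X ^ 2` evaluated at consecutive terms `X = x k` and
`Y = x (k + 1)` of a sequence; it measures the size of a solution of the recurrence with
characteristic polynomial `X ^ 2 + p * X + q`. -/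
def recurrenceForm (p q : R) (x : ℕ → R) (k : ℕ) : R :=
  x (k + 1) ^ 2 + p * x (k + 1) * x k + q * x k ^ 2

lemma recurrenceForm_eq_pow_mul (hx : ∀ k, x (k + 2) + p * x (k + 1) + q * x k = 0) (k : ℕ) :
    recurrenceForm p q x k = q ^ k * recurrenceForm p q x 0 := by
  induction k with
  | zero => rw [pow_zero, one_mul]
  | succ k ih =>
    have hstep : recurrenceForm p q x (k + 1) = q * recurrenceForm p q x k := by
      simp only [recurrenceForm]
      linear_combination (x (k + 2) - q * x k) * hx k
    rw [hstep, ih, pow_succ', mul_assoc]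

lemma discrim_mul_sq_le_recurrenceForm [LinearOrder R] [IsStrictOrderedRing R]
    (p q : R) (x : ℕ → R) (k : ℕ) :
    (4 * q - p ^ 2) * x k ^ 2 ≤ 4 * recurrenceForm p q x k := by
  rw [recurrenceForm]
  linarith [sq_nonneg (2 * x (k + 1) + p * x k)]

end Recurrence

section Tribonacci

lemma trib_add_three (k : ℕ) : trib (k + 3) = trib (k + 2) + trib (k + 1) + trib k := rfl

lemma trib_add_two_add_eq_pow {R : Type*} [CommRing R] {t : R} (ht : t ^ 3 - t ^ 2 - t - 1 = 0)
    (k : ℕ) :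
    (trib (k + 2) : R) + (t - 1) * trib (k + 1) + (t ^ 2 - t - 1) * trib k = t ^ (k + 1) := by
  induction k with
  | zero => simp [trib]
  | succ k ih =>
    rw [trib_add_three]
    push_cast
    linear_combination t * ih - (trib k : R) * ht

/-- The coefficient `c` of the real root `t` in the Binet-type formula for the tribonacci
sequence (the paper's `c_α`). -/
def tribCoeff {K : Type*} [Field K] (t : K) : K := 1 / (-t ^ 2 + 4 * t - 1)

/-- The error made when the `k`-th tribonacci number is replaced by its dominant term
`tribCoeff t * t ^ k`. -/
def tribError {K : Type*} [Field K] (t : K) (k : ℕ) : K := trib k - tribCoeff t * t ^ k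

section CharZero

variable {K : Type*} [Field K] [CharZero K] {t : K}

lemma tribCoeff_eq (ht : t ^ 3 - t ^ 2 - t - 1 = 0) :
    tribCoeff t = (5 * t ^ 2 - 3 * t - 4) / 22 := by
  have hmul : (-t ^ 2 + 4 * t - 1) * (5 * t ^ 2 - 3 * t - 4) = 22 := by
    linear_combination (18 - 5 * t) * ht
  have hne : -t ^ 2 + 4 * t - 1 ≠ 0 := by
    refine left_ne_zero_of_mul (b := 5 * t ^ 2 - 3 * t - 4) ?_
    rw [hmul]
    norm_num
  rw [tribCoeff, div_eq_div_iff hne (by norm_num)]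
  linear_combination -hmul

lemma tribError_add_two (ht : t ^ 3 - t ^ 2 - t - 1 = 0) (k : ℕ) :
    tribError t (k + 2) + (t - 1) * tribError t (k + 1) + (t ^ 2 - t - 1) * tribError t k = 0 := by
  have hcoeff : tribCoeff t * (t ^ 2 + (t - 1) * t + (t ^ 2 - t - 1)) = t := by
    rw [tribCoeff_eq ht]
    linear_combination (15 * t - 4) / 22 * ht
  simp only [tribError]
  linear_combination trib_add_two_add_eq_pow ht k - t ^ k * hcoeff

-- `-44` is the discriminant of `x ^ 3 - x ^ 2 - x - 1`.
lemma tribCoeff_mul_recurrenceForm_tribError_zero (ht : t ^ 3 - t ^ 2 - t - 1 = 0) :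
    44 * tribCoeff t * recurrenceForm (t - 1) (t ^ 2 - t - 1) (tribError t) 0 =
      4 * (t ^ 2 - t - 1) - (t - 1) ^ 2 := by
  simp only [recurrenceForm, tribError, trib, tribCoeff_eq ht]
  push_cast
  grind

end CharZero

variable {K : Type*} [Field K] [LinearOrder K] [IsStrictOrderedRing K] {t : K}

lemma lt_of_tribonacci_root (ht : t ^ 3 - t ^ 2 - t - 1 = 0) : 1.839 < t := by
  by_contra! hle
  have hfactor : 0 ≤ (1.839 - t) * (t ^ 2 + 0.839 * t + 0.542921) :=
    mul_nonneg (sub_nonneg.mpr hle) (by nlinarith [sq_nonneg (t + 0.4195)])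
  norm_num at hle hfactor
  linarith

lemma lt_tribCoeff (ht : t ^ 3 - t ^ 2 - t - 1 = 0) : 0.336 < tribCoeff t := by
  have ht_lt := lt_of_tribonacci_root ht
  rw [tribCoeff_eq ht]
  norm_num at ht_lt ⊢
  nlinarith

lemma tribCoeff_mul_pow_mul_tribError_sq_le (ht : t ^ 3 - t ^ 2 - t - 1 = 0) (k : ℕ) :
    11 * tribCoeff t * t ^ k * tribError t k ^ 2 ≤ 1 := by
  have ht_lt := lt_of_tribonacci_root ht
  have hc := lt_tribCoeff ht
  have hdiscrim : 0 < 4 * (t ^ 2 - t - 1) - (t - 1) ^ 2 := by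
    rw [show 4 * (t ^ 2 - t - 1) - (t - 1) ^ 2 = (3 * t - 5) * (t + 1) by ring]
    norm_num at ht_lt
    exact mul_pos (by linarith) (by linarith)
  have hweight : 0 ≤ 11 * tribCoeff t * t ^ k := by
    have := (by norm_num : (0 : K) < 0.336).trans hc
    have := (by norm_num : (0 : K) < 1.839).trans ht_lt
    positivity
  have hpow : t ^ k * (t ^ 2 - t - 1) ^ k = 1 := by
    rw [← mul_pow, show t * (t ^ 2 - t - 1) = 1 by linear_combination ht, one_pow]
  refine le_of_mul_le_mul_left ?_ hdiscrim
  set Q := recurrenceForm (t - 1) (t ^ 2 - t - 1) (tribError t) with hQ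
  calc (4 * (t ^ 2 - t - 1) - (t - 1) ^ 2) * (11 * tribCoeff t * t ^ k * tribError t k ^ 2)
      = 11 * tribCoeff t * t ^ k *
          ((4 * (t ^ 2 - t - 1) - (t - 1) ^ 2) * tribError t k ^ 2) := by ring
    _ ≤ 11 * tribCoeff t * t ^ k * (4 * Q k) :=
        mul_le_mul_of_nonneg_left (discrim_mul_sq_le_recurrenceForm _ _ _ k) hweight
    _ = 11 * tribCoeff t * t ^ k * (4 * ((t ^ 2 - t - 1) ^ k * Q 0)) := by
        rw [hQ, recurrenceForm_eq_pow_mul (tribError_add_two ht)]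
    _ = t ^ k * (t ^ 2 - t - 1) ^ k * (44 * tribCoeff t * Q 0) := by ring
    _ = (4 * (t ^ 2 - t - 1) - (t - 1) ^ 2) * 1 := by
        rw [hpow, tribCoeff_mul_recurrenceForm_tribError_zero ht, one_mul, mul_one]

lemma abs_tribError_le (ht : t ^ 3 - t ^ 2 - t - 1 = 0) {k : ℕ} (hk : 2 ≤ k) :
    |tribError t k| ≤ 0.3 := by
  have ht_lt := lt_of_tribonacci_root ht
  have hpow : 1.839 ^ 2 ≤ t ^ k :=
    (pow_le_pow_left₀ (by norm_num) ht_lt.le 2).trans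
      (pow_le_pow_right₀ (le_trans (by norm_num) ht_lt.le) hk)
  have hweight : 11 * 0.336 * 1.839 ^ 2 * tribError t k ^ 2 ≤ 1 := by
    refine le_trans ?_ (tribCoeff_mul_pow_mul_tribError_sq_le ht k)
    have := (lt_tribCoeff ht).le
    gcongr
  refine abs_le_of_sq_le_sq ?_ (by norm_num)
  norm_num at hweight ⊢
  linarith

lemma lt_tribCoeff_mul_pow_sub_pow (ht : t ^ 3 - t ^ 2 - t - 1 = 0) {l m : ℕ} (hl : 2 ≤ l)
    (hlm : l < m) : 0.95 < tribCoeff t * (t ^ m - t ^ l) := by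
  have ht_lt := lt_of_tribonacci_root ht
  have ht_one : 1 ≤ t := le_trans (by norm_num) ht_lt.le
  have hsub : t + 1 ≤ t ^ m - t ^ l :=
    calc t + 1 = t ^ 2 * (t - 1) := by linear_combination -ht
      _ ≤ t ^ l * (t - 1) := by have := sub_nonneg.mpr ht_one; gcongr
      _ = t ^ (l + 1) - t ^ l := by ring
      _ ≤ t ^ m - t ^ l := by gcongr; exact hlm
  calc (0.95 : K) < 0.336 * (1.839 + 1) := by norm_num
    _ ≤ tribCoeff t * (t ^ m - t ^ l) :=
      mul_le_mul (lt_tribCoeff ht).le (by linarith) (by norm_num)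
        (le_trans (by norm_num) (lt_tribCoeff ht).le)

end Tribonacci

section Golden

open Real goldenRatio

lemma abs_goldenConj_pow_sub_pow_le {k n : ℕ} (hk : 2 ≤ k) (hkn : k < n) :
    |ψ ^ n - ψ ^ k| ≤ -ψ := by
  have habs : |ψ| = -ψ := abs_of_neg goldenConj_neg
  have hpow {i j : ℕ} (hij : i ≤ j) : |ψ ^ j| ≤ (-ψ) ^ i := by
    rw [abs_pow, habs]
    exact pow_le_pow_of_le_one (by linarith [goldenConj_neg])
      (by linarith [neg_one_lt_goldenConj]) hij
  calc |ψ ^ n - ψ ^ k| ≤ |ψ ^ n| + |ψ ^ k| := abs_sub _ _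
    _ ≤ (-ψ) ^ 3 + (-ψ) ^ 2 := add_le_add (hpow (by omega)) (hpow hk)
    _ = -ψ := by linear_combination -ψ * goldenConj_sq

lemma inv_goldenRatio_pow_sub_pow_le {k n : ℕ} (hkn : k < n) :
    (φ ^ n - φ ^ k)⁻¹ ≤ φ ^ (2 - n : ℤ) := by
  have hsucc : φ ^ (k + 1) ≤ φ ^ n := pow_le_pow_right₀ one_lt_goldenRatio.le hkn
  have hpos : 0 < φ ^ n - φ ^ k := sub_pos.mpr (pow_lt_pow_right₀ one_lt_goldenRatio hkn)
  rw [zpow_sub₀ goldenRatio_ne_zero, zpow_natCast, zpow_ofNat, inv_eq_one_div,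
    div_le_div_iff₀ hpos (pow_pos goldenRatio_pos n), one_mul]
  calc φ ^ n ≤ φ ^ n + φ * (φ ^ n - φ ^ (k + 1)) :=
        le_add_of_nonneg_right (mul_nonneg goldenRatio_pos.le (sub_nonneg.mpr hsucc))
    _ = φ ^ 2 * (φ ^ n - φ ^ k) := by linear_combination -φ ^ n * goldenRatio_sq

lemma sqrt_five_mul_fib (n : ℕ) : √5 * Nat.fib n = φ ^ n - ψ ^ n := by
  rw [coe_fib_eq]
  exact mul_div_cancel₀ _ (by positivity)

lemma sqrt_five_lt : √5 < 2.2361 := by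
  rw [sqrt_lt' (by norm_num)]
  norm_num

lemma lt_sqrt_five : 2.236 < √5 := by
  rw [lt_sqrt (by norm_num)]
  norm_num

lemma lt_goldenRatio_sq : 2.618 < φ ^ 2 := by
  rw [goldenRatio_sq, goldenRatio]
  linarith [lt_sqrt_five]

lemma lt_sqrt_five_mul_tribCoeff_mul_pow_sub_pow {t : ℝ} (ht : t ^ 3 - t ^ 2 - t - 1 = 0)
    {l m : ℕ} (hl : 2 ≤ l) (hlm : l < m) : 2.1 < √5 * (tribCoeff t * (t ^ m - t ^ l)) :=
  calc (2.1 : ℝ) < 2.236 * 0.95 := by norm_num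
    _ ≤ √5 * (tribCoeff t * (t ^ m - t ^ l)) :=
      mul_le_mul lt_sqrt_five.le (lt_tribCoeff_mul_pow_sub_pow ht hl hlm).le (by norm_num)
        (sqrt_nonneg 5)

lemma abs_goldenRatio_pow_sub_tribonacci_le {t : ℝ} (ht : t ^ 3 - t ^ 2 - t - 1 = 0)
    {k n l m : ℕ} (hk : 2 ≤ k) (hkn : k < n) (hl : 2 ≤ l) (hlm : l < m)
    (h : (Nat.fib n : ℤ) - Nat.fib k = trib m - trib l) :
    |φ ^ n - φ ^ k - √5 * (tribCoeff t * (t ^ m - t ^ l))| ≤ 1.97 := by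
  have hcast : (Nat.fib n : ℝ) - Nat.fib k = trib m - trib l := by exact_mod_cast h
  have hdiff : φ ^ n - φ ^ k - √5 * (tribCoeff t * (t ^ m - t ^ l)) =
      ψ ^ n - ψ ^ k + √5 * (tribError t m - tribError t l) := by
    simp only [tribError]
    linear_combination √5 * hcast - sqrt_five_mul_fib n + sqrt_five_mul_fib k
  have herr : |tribError t m - tribError t l| ≤ 0.3 + 0.3 :=
    (abs_sub _ _).trans
      (add_le_add (abs_tribError_le ht (hl.trans hlm.le)) (abs_tribError_le ht hl))
  have hψ : -ψ ≤ 0.6181 := by rw [goldenConj]; linarith [sqrt_five_lt]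
  calc |φ ^ n - φ ^ k - √5 * (tribCoeff t * (t ^ m - t ^ l))|
      ≤ |ψ ^ n - ψ ^ k| + √5 * |tribError t m - tribError t l| := by
        rw [hdiff]
        refine (abs_add_le _ _).trans_eq ?_
        rw [abs_mul, abs_of_nonneg (sqrt_nonneg 5)]
    _ ≤ 0.6181 + 2.2361 * (0.3 + 0.3) := by
        gcongr
        · exact (abs_goldenConj_pow_sub_pow_le hk hkn).trans hψ
        · exact sqrt_five_lt.le
    _ ≤ 1.97 := by norm_num

end Golden

/-- If `n > n₁ ≥ 2`, `m > m₁ ≥ 2` and `F n - F n₁ = T m - T m₁`, then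
`|((α^(n-n₁)-1)/(√5·c_α·(α_T^(m-m₁)-1)))·α^(n₁)·α_T^(-m₁) - 1| < 1.64·α^(4-n)`. -/
theorem fib_trib_linear_form_three (α αT cα : ℝ)
    (hα : α = (1 + Real.sqrt 5) / 2)
    (hroot : αT ^ 3 - αT ^ 2 - αT - 1 = 0)
    (huniq : ∀ x : ℝ, x ^ 3 - x ^ 2 - x - 1 = 0 → x = αT)
    (hcα : cα = 1 / (-αT ^ 2 + 4 * αT - 1))
    (n m n₁ m₁ : ℕ) (hn₁ : 2 ≤ n₁) (hn : n₁ < n) (hm₁ : 2 ≤ m₁) (hm : m₁ < m)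
    (h : (Nat.fib n : ℤ) - Nat.fib n₁ = trib m - trib m₁) :
    |((α ^ (n - n₁) - 1) / (Real.sqrt 5 * cα * (αT ^ (m - m₁) - 1))) *
        α ^ n₁ * αT ^ (-(m₁ : ℤ)) - 1| <
      1.64 * α ^ (4 - (n : ℤ)) := by
  obtain rfl : α = Real.goldenRatio := hα
  replace hcα : cα = tribCoeff αT := hcα
  have hX : 0 < Real.goldenRatio ^ n - Real.goldenRatio ^ n₁ :=
    sub_pos.mpr (pow_lt_pow_right₀ Real.one_lt_goldenRatio hn)
  rw [hcα, div_mul_pow_mul_zpow_neg_eq _ _ _ hn.le hm.le, mul_assoc √5]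
  calc _ ≤ 1.97 * (1 + 1.97 / 2.1) / (Real.goldenRatio ^ n - Real.goldenRatio ^ n₁) :=
        abs_div_sub_one_le hX (by norm_num)
          (lt_sqrt_five_mul_tribCoeff_mul_pow_sub_pow hroot hm₁ hm).le
          (abs_goldenRatio_pow_sub_tribonacci_le hroot hn₁ hn hm₁ hm h)
    _ ≤ 1.97 * (1 + 1.97 / 2.1) * Real.goldenRatio ^ (2 - n : ℤ) := by
        rw [div_eq_mul_inv]
        gcongr
        exact inv_goldenRatio_pow_sub_pow_le hn
    _ < 1.64 * Real.goldenRatio ^ 2 * Real.goldenRatio ^ (2 - n : ℤ) :=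
        mul_lt_mul_of_pos_right (by linarith [lt_goldenRatio_sq])
          (zpow_pos Real.goldenRatio_pos _)
    _ = 1.64 * Real.goldenRatio ^ (4 - n : ℤ) := by
        rw [mul_assoc, ← zpow_ofNat, ← zpow_add₀ Real.goldenRatio_ne_zero]
        ring_nf
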